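/- arXiv:2008.00788 — 3 statements merged into one kernel-verified Lean document; each statement's English description precedes it below -/
import Mathlib

section
/- If h : Σ_N^+ → ℝ is an energy minimizer, say constant on every cylinder set of length m+1, then for every continuous u : Σ_N^+ → ℝ the limit E(h,u) = lim_{n→∞} E_{H_n}(h|_{V_n}, u|_{V_n}) exists and equals E_{H_m}(h|_{V_m}, u|_{V_m}); in particular E(h) = E_{H_m}(h|_{V_m}). -/
open Filter Topology MeasureTheory Finset Classical

noncomputable section

/-- The one-sided full shift space `Σ_N^+` on `N` symbols; coordinates are indexed
from `0`, so the paper's `x_1 x_2 ⋯` is `x 0, x 1, ⋯` here. It carries the product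
of the discrete topology on `Fin N`. -/
abbrev SSp (N : ℕ) : Type := ℕ → Fin N

/-- The level-`m` vertex set `V_m = {p : p_i = p_{i+1} for all i ≥ m+1}` (1-based),
i.e. the sequences that are constant from (0-based) coordinate `m` on.  It is
realized as a `Finset` via the parametrization by the first `m+1` coordinates;
see `mem_V` for the defining property. -/
noncomputable def V (N m : ℕ) : Finset (SSp N) :=
  (Finset.univ : Finset (Fin (m + 1) → Fin N)).image
    (fun w j => w ⟨min j m, by omega⟩)

lemma const_from (N m : ℕ) (p : SSp N) (h : ∀ i, m ≤ i → p i = p (i + 1)) :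
    ∀ j, m ≤ j → p j = p m := by
  intro j hj
  induction j with
  | zero => have : m = 0 := by omega
            simp [this]
  | succ k ih =>
      rcases Nat.lt_or_ge k m with hk | hk
      · have : m = k + 1 := by omega
        simp [this]
      · rw [← h k hk]
        exact ih hk

/-- Membership in `V N m` is exactly the paper's condition
`p_i = p_{i+1}` for all `i ≥ m+1` (1-based), i.e. `p i = p (i+1)` for all `i ≥ m`. -/
lemma mem_V {N m : ℕ} {p : SSp N} :
    p ∈ V N m ↔ ∀ i, m ≤ i → p i = p (i + 1) := by
  classical
  constructor
  · intro hp i hi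
    simp only [V, Finset.mem_image] at hp
    obtain ⟨w, -, rfl⟩ := hp
    have h1 : min i m = m := by omega
    have h2 : min (i + 1) m = m := by omega
    simp [h1, h2]
  · intro h
    simp only [V, Finset.mem_image]
    refine ⟨fun j => p j, Finset.mem_univ _, ?_⟩
    funext j
    rcases Nat.lt_or_ge j m with hj | hj
    · have : min j m = j := by omega
      simp [this]
    · have : min j m = m := by omega
      simp only [this]
      exact (const_from N m p h j hj).symm

/-- The deleted neighbourhood `U_{p,m} = {q ∈ V_m : q ≠ p, q_i = p_i for 1 ≤ i ≤ m}`
(1-based), i.e. `q` agrees with `p` on the first `m` (0-based: `i < m`) coordinates. -/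
noncomputable def U (N m : ℕ) (p : SSp N) : Finset (SSp N) :=
  (V N m).filter (fun q => q ≠ p ∧ ∀ i, i < m → q i = p i)

/-- `κ_p = min {j : p ∈ V_j}`. -/
noncomputable def kappa (N : ℕ) (p : SSp N) : ℕ := sInf {j | p ∈ V N j}

/-- The difference operator
`H_m u (p) = Σ_{i = κ_p}^{m} Σ_{q ∈ U_{p,i}} (u(q) − u(p))`. -/
noncomputable def H (N m : ℕ) (u : SSp N → ℝ) (p : SSp N) : ℝ :=
  ∑ i ∈ Finset.Icc (kappa N p) m, ∑ q ∈ U N i p, (u q - u p)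

/-- The Dirichlet form `E_{H_m}(u, v) = − Σ_{p ∈ V_m} u(p) · H_m v(p)`. -/
noncomputable def EH (N m : ℕ) (u v : SSp N → ℝ) : ℝ :=
  -∑ p ∈ V N m, u p * H N m v p

/-- The cylinder set `[p_1 ⋯ p_m]`, determined by the first `m` coordinates of `p`. -/
def cyl (N m : ℕ) (p : SSp N) : Set (SSp N) := {x | ∀ i, i < m → x i = p i}

/-- `χ_p^m` : the indicator function of the cylinder set `[p_1 ⋯ p_{m+1}]`. -/
noncomputable def chi (N m : ℕ) (p : SSp N) : SSp N → ℝ :=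
  (cyl N (m + 1) p).indicator 1

/-- `u ∈ dom E`: `u` is continuous and the energy
`E(u) = lim_m E_{H_m}(u|_{V_m})` exists (and is finite). -/
def MemDomE (N : ℕ) (u : SSp N → ℝ) : Prop :=
  Continuous u ∧ ∃ L : ℝ, Tendsto (fun m => EH N m u u) atTop (nhds L)

/-- `v ∈ dom_M E`: `v` has finite energy and vanishes on the boundary `V_M`. -/
def MemDomME (N M : ℕ) (v : SSp N → ℝ) : Prop :=
  MemDomE N v ∧ ∀ p ∈ V N M, v p = 0

/-- `u ∈ 𝒟_M` with `Δ u = f` (strong formulation with boundary `V_M`):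
`u` and `f` are continuous and
`lim_{m → ∞} max_{p ∈ V_m ∖ V_M} |N^{m+1} H_m u(p) − f(p)| = 0`. -/
def IsLaplacianOn (N M : ℕ) (u f : SSp N → ℝ) : Prop :=
  Continuous u ∧ Continuous f ∧
    ∀ ε : ℝ, 0 < ε → ∃ m₀ : ℕ, ∀ m, m₀ ≤ m → ∀ p ∈ V N m, p ∉ V N M →
      |(N : ℝ) ^ (m + 1) * H N m u p - f p| < ε

/-- `u ∈ D_μ` with `Δ u = f` (original definition of the Laplacian):
`u` and `f` are continuous and
`lim_{m → ∞} max_{p ∈ V_m ∖ V_{m−1}} |N^{m+1} H_m u(p) − f(p)| = 0`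
(the level is written `m+1` to avoid natural subtraction). -/
def IsLaplacianDmu (N : ℕ) (u f : SSp N → ℝ) : Prop :=
  Continuous u ∧ Continuous f ∧
    ∀ ε : ℝ, 0 < ε → ∃ m₀ : ℕ, ∀ m, m₀ ≤ m → ∀ p ∈ V N (m + 1), p ∉ V N m →
      |(N : ℝ) ^ (m + 2) * H N (m + 1) u p - f p| < ε

/-- `μ` is the equidistributed Bernoulli measure:
`μ([p_1 ⋯ p_m]) = N^{−m}` for every cylinder set. -/
def IsBernoulli (N : ℕ) (μ : Measure (SSp N)) : Prop :=
  ∀ (m : ℕ) (p : SSp N), μ (cyl N m p) = (N : ENNReal)⁻¹ ^ m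

/-- `ρ(x,y) = min {i : x_i ≠ y_i}` (1-based; `0`-based first disagreement plus one). -/
noncomputable def rho (N : ℕ) (x y : SSp N) : ℕ := sInf {i | x i ≠ y i} + 1

/-- The matrix `(G_m)_{pq}`: `2/N` if `q = p`, `1/N` if `q ∈ U_{p,m}`, `0` otherwise. -/
noncomputable def Gmat (N m : ℕ) (p q : SSp N) : ℝ :=
  if q = p then 2 / N else if q ∈ U N m p then 1 / N else 0

/-- The Green's function
`g(x,y) = Σ_{m=1}^{ρ(x,y)−1} Σ_{r,s ∈ V_m ∖ V_{m−1}} (G_m)_{rs} χ_r^m(x) χ_s^m(y)`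
for `ρ(x,y) > 1`, and `g(x,y) = 0` for `ρ(x,y) = 1` (the sum is then empty). -/
noncomputable def greenFn (N : ℕ) (x y : SSp N) : ℝ :=
  ∑ m ∈ Finset.Icc 1 (rho N x y - 1),
    ∑ r ∈ (V N m).filter (fun r => r ∉ V N (m - 1)),
      ∑ s ∈ (V N m).filter (fun s => s ∉ V N (m - 1)),
        Gmat N m r s * chi N m r x * chi N m s y

/-- The Green's operator `G_μ f (x) = ∫_{Σ_N^+ ∖ {x}} g(x,y) f(y) dμ(y)`. -/
noncomputable def Gop (N : ℕ) (μ : Measure (SSp N)) (f : SSp N → ℝ) (x : SSp N) : ℝ :=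
  ∫ y in ({x}ᶜ : Set (SSp N)), greenFn N x y * f y ∂μ


lemma V_subset_succ (N n : ℕ) : V N n ⊆ V N (n + 1) := fun _ hp =>
  mem_V.2 fun i hi => mem_V.1 hp i (by omega)

lemma kappa_le {N n : ℕ} {p : SSp N} (hp : p ∈ V N n) : kappa N p ≤ n :=
  Nat.sInf_le hp

lemma mem_V_of_kappa_le {N n k : ℕ} {p : SSp N} (hp : p ∈ V N k) (hk : kappa N p ≤ n) :
    p ∈ V N n := by
  have hmem : p ∈ V N (kappa N p) := Nat.sInf_mem (s := {j | p ∈ V N j}) ⟨k, hp⟩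
  exact mem_V.2 fun i hi => mem_V.1 hmem i (hk.trans hi)

lemma H_succ {N n : ℕ} {p : SSp N} (hp : p ∈ V N (n + 1)) (u : SSp N → ℝ) :
    H N (n + 1) u p = H N n u p + ∑ q ∈ U N (n + 1) p, (u q - u p) :=
  Finset.sum_Icc_succ_top (kappa_le hp) _

lemma H_eq_zero_of_notMem {N n k : ℕ} {p : SSp N} (hk : p ∈ V N k) (hp : p ∉ V N n)
    (u : SSp N → ℝ) : H N n u p = 0 := by
  rw [H, Finset.Icc_eq_empty fun hle => hp (mem_V_of_kappa_le hk hle), Finset.sum_empty]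

/-- The summand is antisymmetric in `p` and `q`, because `h` agrees on neighbours. -/
lemma sum_mul_sum_U_eq_zero {N n : ℕ} {h : SSp N → ℝ}
    (hh : ∀ x y : SSp N, (∀ i, i < n → x i = y i) → h x = h y) (u : SSp N → ℝ) :
    ∑ p ∈ V N n, h p * ∑ q ∈ U N n p, (u q - u p) = 0 := by
  have hswap : ∑ p ∈ V N n, h p * ∑ q ∈ U N n p, (u q - u p) =
      -∑ p ∈ V N n, h p * ∑ q ∈ U N n p, (u q - u p) := by
    simp only [U, Finset.sum_filter, Finset.mul_sum]
    conv_lhs => rw [Finset.sum_comm]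
    simp only [← Finset.sum_neg_distrib]
    refine Finset.sum_congr rfl fun p _ => Finset.sum_congr rfl fun q _ => ?_
    by_cases hpq : q ≠ p ∧ ∀ i, i < n → q i = p i
    · have hqp : p ≠ q ∧ ∀ i, i < n → p i = q i :=
        ⟨hpq.1.symm, fun i hi => (hpq.2 i hi).symm⟩
      rw [if_pos hpq, if_pos hqp, hh q p hpq.2]
      ring
    · have hqp : ¬(p ≠ q ∧ ∀ i, i < n → p i = q i) := fun hqp =>
        hpq ⟨hqp.1.symm, fun i hi => (hqp.2 i hi).symm⟩
      rw [if_neg hpq, if_neg hqp]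
      ring
  linarith

lemma EH_succ {N n : ℕ} {h : SSp N → ℝ}
    (hh : ∀ x y : SSp N, (∀ i, i < n + 1 → x i = y i) → h x = h y) (u : SSp N → ℝ) :
    EH N (n + 1) h u = EH N n h u := by
  have hsplit : ∑ p ∈ V N (n + 1), h p * H N (n + 1) u p =
      ∑ p ∈ V N (n + 1), h p * H N n u p +
        ∑ p ∈ V N (n + 1), h p * ∑ q ∈ U N (n + 1) p, (u q - u p) := by
    rw [← Finset.sum_add_distrib]
    exact Finset.sum_congr rfl fun p hp => by rw [H_succ hp, mul_add]
  have hrestrict : ∑ p ∈ V N n, h p * H N n u p = ∑ p ∈ V N (n + 1), h p * H N n u p :=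
    Finset.sum_subset (V_subset_succ N n) fun p hp hpn => by
      rw [H_eq_zero_of_notMem hp hpn, mul_zero]
  rw [EH, EH, hsplit, sum_mul_sum_U_eq_zero hh, add_zero, hrestrict]

lemma EH_eq_of_le {N m n : ℕ} {h : SSp N → ℝ}
    (hh : ∀ x y : SSp N, (∀ i, i < m + 1 → x i = y i) → h x = h y) (u : SSp N → ℝ)
    (hmn : m ≤ n) : EH N n h u = EH N m h u := by
  induction n, hmn using Nat.le_induction with
  | base => rfl
  | succ n hmn ih =>
    rw [EH_succ (fun x y hxy => hh x y fun i hi => hxy i (by omega)) u, ih]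

/-- If `h` is an energy minimizer, constant on every cylinder set of
length `m+1`, then for every continuous `u` the limit `E(h,u) = lim_n E_{H_n}(h,u)`
exists and equals `E_{H_m}(h,u)`; in particular `E(h) = E_{H_m}(h)`. -/
theorem statement2 (N : ℕ) (hN : 2 ≤ N) (m : ℕ) (h : SSp N → ℝ)
    (hmin : ∀ x y : SSp N, (∀ i, i < m + 1 → x i = y i) → h x = h y)
    (u : SSp N → ℝ) (hu : Continuous u) :
    Tendsto (fun n => EH N n h u) atTop (nhds (EH N m h u)) ∧
    Tendsto (fun n => EH N n h h) atTop (nhds (EH N m h h)) := by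
  exact ⟨tendsto_atTop_of_eventually_const fun n hn => EH_eq_of_le hmin u hn,
    tendsto_atTop_of_eventually_const fun n hn => EH_eq_of_le hmin h hn⟩
end
end

section
/- Let u be continuous on Σ_N^+ with finite energy (u ∈ dom E), and for m ≥ 0 let u_m = Σ_{p ∈ V_m} u(p) χ_p^m. Then E(u − u_m) = E(u) − E_{H_m}(u_m|_{V_m}), and u_m converges to u in energy: u_m → u uniformly on Σ_N^+ and E(u − u_m) → 0 as m → ∞. -/
open Filter Topology MeasureTheory Finset Classical

noncomputable section

/-- The element of `V N m` which agrees with `x` on the first `m + 1` coordinates. -/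
def trunc (N m : ℕ) (x : SSp N) : SSp N := fun j => x (min j m)

lemma trunc_mem_V (N m : ℕ) (x : SSp N) : trunc N m x ∈ V N m := by
  refine mem_V.2 fun i hi => ?_
  simp [trunc, min_eq_right hi, min_eq_right (hi.trans i.le_succ)]

lemma trunc_eq_iff {N m : ℕ} {p x : SSp N} (hp : p ∈ V N m) :
    trunc N m x = p ↔ ∀ i, i < m + 1 → x i = p i := by
  constructor
  · rintro rfl i hi
    simp [trunc, min_eq_left (Nat.lt_succ_iff.1 hi)]
  · intro h
    funext j
    rcases le_total j m with hj | hj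
    · simp [trunc, min_eq_left hj, h j (Nat.lt_succ_iff.2 hj)]
    · simp only [trunc, min_eq_right hj, h m m.lt_succ_self]
      exact (const_from N m p (mem_V.1 hp) j hj).symm

lemma trunc_eq_self {N m : ℕ} {p : SSp N} (hp : p ∈ V N m) : trunc N m p = p :=
  (trunc_eq_iff hp).2 fun _ _ => rfl

lemma sum_mul_chi (N m : ℕ) (u : SSp N → ℝ) (x : SSp N) :
    ∑ p ∈ V N m, u p * chi N m p x = u (trunc N m x) := by
  rw [Finset.sum_eq_single_of_mem _ (trunc_mem_V N m x)]
  · have h : x ∈ cyl N (m + 1) (trunc N m x) := (trunc_eq_iff (trunc_mem_V N m x)).1 rfl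
    simp [chi, h]
  · intro p hp hne
    have h : x ∉ cyl N (m + 1) p := fun h => hne ((trunc_eq_iff hp).2 h).symm
    simp [chi, h]

lemma V_mono (N : ℕ) : Monotone (V N) := fun _ _ h _ hp =>
  mem_V.2 fun j hj => mem_V.1 hp j (h.trans hj)

lemma kappa_le_iff {N i m : ℕ} {p : SSp N} (hp : p ∈ V N m) :
    kappa N p ≤ i ↔ p ∈ V N i := by
  have h : kappa N p ∈ {j | p ∈ V N j} := Nat.sInf_mem ⟨m, hp⟩
  exact ⟨fun hi => V_mono N hi h, fun hi => Nat.sInf_le hi⟩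

/-- The contribution of the pairs of level-`i` neighbours to the energy. -/
def levelEnergy (N i : ℕ) (u : SSp N → ℝ) : ℝ :=
  -∑ p ∈ V N i, u p * ∑ q ∈ U N i p, (u q - u p)

lemma EH_eq_sum_levelEnergy (N m : ℕ) (u : SSp N → ℝ) :
    EH N m u u = ∑ i ∈ Finset.range (m + 1), levelEnergy N i u := by
  simp only [EH, H, levelEnergy, Finset.mul_sum (Finset.Icc _ _), Finset.sum_neg_distrib]
  congr 1
  refine Finset.sum_comm' fun p i => ?_
  simp only [Finset.mem_Icc, Finset.mem_range, Nat.lt_succ_iff]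
  constructor
  · rintro ⟨hp, hk, hi⟩
    exact ⟨(kappa_le_iff hp).1 hk, hi⟩
  · rintro ⟨hp, hi⟩
    exact ⟨V_mono N hi hp, (kappa_le_iff hp).2 hp, hi⟩

lemma levelEnergy_congr {N i : ℕ} {u v : SSp N → ℝ} (h : ∀ p ∈ V N i, u p = v p) :
    levelEnergy N i u = levelEnergy N i v := by
  unfold levelEnergy
  congr 1
  refine Finset.sum_congr rfl fun p hp => ?_
  rw [h p hp]
  congr 1
  refine Finset.sum_congr rfl fun q hq => ?_
  rw [h q (Finset.mem_filter.1 hq).1]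

lemma levelEnergy_zero (N i : ℕ) : levelEnergy N i (fun _ => 0) = 0 := by
  simp [levelEnergy]

lemma mem_U_comm {N i : ℕ} {p q : SSp N} :
    p ∈ V N i ∧ q ∈ U N i p ↔ p ∈ U N i q ∧ q ∈ V N i := by
  simp only [U, Finset.mem_filter, ne_comm (a := p), eq_comm (a := p _)]
  tauto

lemma levelEnergy_eq_half_sum_sq (N i : ℕ) (u : SSp N → ℝ) :
    levelEnergy N i u = (∑ p ∈ V N i, ∑ q ∈ U N i p, (u q - u p) ^ 2) / 2 := by
  have hswap : ∑ p ∈ V N i, ∑ q ∈ U N i p, u p * (u q - u p)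
      = ∑ p ∈ V N i, ∑ q ∈ U N i p, u q * (u p - u q) :=
    Finset.sum_comm' fun _ _ => mem_U_comm
  have hsum : ∑ p ∈ V N i, ∑ q ∈ U N i p, (u q - u p) ^ 2
      = -(∑ p ∈ V N i, ∑ q ∈ U N i p, u p * (u q - u p))
        - ∑ p ∈ V N i, ∑ q ∈ U N i p, u q * (u p - u q) := by
    simp only [← Finset.sum_neg_distrib, ← Finset.sum_sub_distrib]
    exact Finset.sum_congr rfl fun p _ => Finset.sum_congr rfl fun q _ => by ring
  rw [hsum, ← hswap]
  simp only [levelEnergy, Finset.mul_sum]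
  ring

lemma trunc_eq_of_mem_U {N m i : ℕ} {p q : SSp N} (hmi : m < i) (hq : q ∈ U N i p) :
    trunc N m q = trunc N m p := by
  funext j
  exact (Finset.mem_filter.1 hq).2.2 _ ((min_le_right j m).trans_lt hmi)

lemma levelEnergy_sub_trunc_of_le {N m i : ℕ} (him : i ≤ m) (u : SSp N → ℝ) :
    levelEnergy N i (fun x => u x - u (trunc N m x)) = 0 := by
  rw [← levelEnergy_zero N i]
  refine levelEnergy_congr fun p hp => ?_
  rw [trunc_eq_self (V_mono N him hp), sub_self]

lemma levelEnergy_sub_trunc_of_lt {N m i : ℕ} (hmi : m < i) (u : SSp N → ℝ) :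
    levelEnergy N i (fun x => u x - u (trunc N m x)) = levelEnergy N i u := by
  simp only [levelEnergy_eq_half_sum_sq]
  congr 1
  refine Finset.sum_congr rfl fun p _ => Finset.sum_congr rfl fun q hq => ?_
  rw [trunc_eq_of_mem_U hmi hq]
  ring

lemma EH_trunc (N m : ℕ) (u : SSp N → ℝ) :
    EH N m (fun x => u (trunc N m x)) (fun x => u (trunc N m x)) = EH N m u u := by
  simp only [EH_eq_sum_levelEnergy]
  refine Finset.sum_congr rfl fun i hi => levelEnergy_congr fun p hp => ?_
  rw [trunc_eq_self (V_mono N (Nat.lt_succ_iff.1 (Finset.mem_range.1 hi)) hp)]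

lemma EH_sub_trunc {N m n : ℕ} (hmn : m ≤ n) (u : SSp N → ℝ) :
    EH N n (fun x => u x - u (trunc N m x)) (fun x => u x - u (trunc N m x))
      = EH N n u u - EH N m u u := by
  simp only [EH_eq_sum_levelEnergy]
  have hle := Nat.succ_le_succ hmn
  rw [← Finset.sum_range_add_sum_Ico _ hle, ← Finset.sum_range_add_sum_Ico _ hle,
    Finset.sum_eq_zero fun i hi =>
      levelEnergy_sub_trunc_of_le (Nat.lt_succ_iff.1 (Finset.mem_range.1 hi)) u,
    Finset.sum_congr rfl fun i hi =>
      levelEnergy_sub_trunc_of_lt (Nat.lt_of_succ_le (Finset.mem_Ico.1 hi).1) u]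
  ring

lemma tendsto_trunc (N : ℕ) (x : SSp N) :
    Tendsto (fun y : ℕ × SSp N => trunc N y.1 y.2) (atTop ×ˢ 𝓝 x) (𝓝 x) := by
  refine tendsto_pi_nhds.2 fun j => ?_
  have hj : Tendsto (fun y : ℕ × SSp N => y.2 j) (atTop ×ˢ 𝓝 x) (𝓝 (x j)) :=
    ((continuous_apply j).tendsto x).comp tendsto_snd
  refine hj.congr' ?_
  filter_upwards [tendsto_fst.eventually (eventually_ge_atTop j)] with y hy
  simp [trunc, min_eq_left hy]

lemma tendstoUniformly_comp_trunc {N : ℕ} {u : SSp N → ℝ} (hu : Continuous u) :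
    TendstoUniformly (fun m x => u (trunc N m x)) u atTop := by
  rw [← tendstoLocallyUniformly_iff_tendstoUniformly_of_compactSpace,
    tendstoLocallyUniformly_iff_forall_tendsto]
  intro x
  have hpair : Tendsto (fun y : ℕ × SSp N => (u y.2, u (trunc N y.1 y.2)))
      (atTop ×ˢ 𝓝 x) (𝓝 (u x, u x)) :=
    ((hu.tendsto x).comp tendsto_snd).prodMk_nhds ((hu.tendsto x).comp (tendsto_trunc N x))
  exact hpair.mono_right (nhds_le_uniformity (u x))

/-- For `u ∈ dom E` (with energy `E(u) = L`) and
`u_m = Σ_{p ∈ V_m} u(p) χ_p^m`: `E(u − u_m) = E(u) − E_{H_m}(u_m)`, and `u_m → u`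
in energy: `u_m → u` uniformly and `E(u − u_m) → 0` as `m → ∞`. -/
theorem statement4 (N : ℕ) (hN : 2 ≤ N) (u : SSp N → ℝ) (hu : Continuous u) (L : ℝ)
    (hL : Tendsto (fun n => EH N n u u) atTop (nhds L)) :
    (∀ m : ℕ,
      Tendsto (fun n => EH N n (fun x => u x - ∑ p ∈ V N m, u p * chi N m p x)
          (fun x => u x - ∑ p ∈ V N m, u p * chi N m p x)) atTop
        (nhds (L - EH N m (fun x => ∑ p ∈ V N m, u p * chi N m p x)
                          (fun x => ∑ p ∈ V N m, u p * chi N m p x)))) ∧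
    TendstoUniformly (fun m x => ∑ p ∈ V N m, u p * chi N m p x) u atTop ∧
    Tendsto (fun m => L - EH N m (fun x => ∑ p ∈ V N m, u p * chi N m p x)
                             (fun x => ∑ p ∈ V N m, u p * chi N m p x)) atTop
      (nhds 0) := by
  simp only [sum_mul_chi, EH_trunc]
  refine ⟨fun m => ?_, tendstoUniformly_comp_trunc hu, ?_⟩
  · refine (hL.sub_const _).congr' ?_
    filter_upwards [eventually_ge_atTop m] with n hn
    exact (EH_sub_trunc hn u).symm
  · simpa using hL.const_sub L
end
end

section
/- Let M ≥ 0, m ≥ M+1 and p ∈ V_m ∖ V_M. Then the indicator function χ_p^m of the cylinder set [p_1⋯p_{m+1}] vanishes at every point of V_M and has finite energy; that is, χ_p^m ∈ dom_M E. -/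
open Filter Topology MeasureTheory Finset Classical

noncomputable section

lemma V_mono_s5 (N : ℕ) {m n : ℕ} (hmn : m ≤ n) : V N m ⊆ V N n := fun _ hx =>
  mem_V.2 fun i hi => mem_V.1 hx i (hmn.trans hi)

lemma mem_V_of_kappa_le_s5 {N m n : ℕ} {x : SSp N} (hx : x ∈ V N n) (h : kappa N x ≤ m) :
    x ∈ V N m :=
  V_mono_s5 N h (Nat.sInf_mem (s := {j | x ∈ V N j}) ⟨n, hx⟩)

lemma isClopen_cyl (N m : ℕ) (p : SSp N) : IsClopen (cyl N m p) := by
  have h : cyl N m p = ⋂ i ∈ Set.Iio m, (fun x : SSp N => x i) ⁻¹' {p i} := by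
    ext x
    simp [cyl]
  rw [h]
  exact (Set.finite_Iio m).isClopen_biInter fun i _ =>
    (isClopen_discrete _).preimage (continuous_apply i)

lemma continuous_chi (N m : ℕ) (p : SSp N) : Continuous (chi N m p) :=
  continuous_one.indicator fun a ha => by
    simp [(isClopen_cyl N (m + 1) p).frontier_eq] at ha

lemma chi_congr {N m : ℕ} (p : SSp N) {x y : SSp N} (h : ∀ i, i < m + 1 → x i = y i) :
    chi N m p x = chi N m p y := by
  have hxy : x ∈ cyl N (m + 1) p ↔ y ∈ cyl N (m + 1) p :=
    forall₂_congr fun i hi => by rw [h i hi]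
  by_cases hy : y ∈ cyl N (m + 1) p
  · simp [chi, hy, hxy.2 hy]
  · simp [chi, hy, mt hxy.1 hy]

/-- The difference operators applied to `χ_p^m` are stationary from level `m` on. -/
lemma H_chi_eq {N m n : ℕ} (hmn : m ≤ n) (p x : SSp N) :
    H N n (chi N m p) x = H N m (chi N m p) x := by
  refine (Finset.sum_subset (Finset.Icc_subset_Icc_right hmn) fun i hi hi' => ?_).symm
  have him : m + 1 ≤ i := by
    simp only [Finset.mem_Icc] at hi hi'
    omega
  refine Finset.sum_eq_zero fun q hq => sub_eq_zero.2 (chi_congr p fun j hj => ?_)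
  exact (Finset.mem_filter.1 hq).2.2 j (hj.trans_le him)

/-- The energies of `χ_p^m` are stationary from level `m` on. -/
lemma EH_chi_eq {N m n : ℕ} (hmn : m ≤ n) (p : SSp N) :
    EH N n (chi N m p) (chi N m p) = EH N m (chi N m p) (chi N m p) := by
  unfold EH
  simp only [H_chi_eq hmn]
  refine congrArg Neg.neg (Finset.sum_subset (V_mono_s5 N hmn) fun x hx hxm => ?_).symm
  have hk : m < kappa N x := not_le.1 fun h => hxm (mem_V_of_kappa_le_s5 hx h)
  simp [H, Finset.Icc_eq_empty_of_lt hk]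

lemma memDomE_chi (N m : ℕ) (p : SSp N) : MemDomE N (chi N m p) :=
  ⟨continuous_chi N m p, _,
    tendsto_atTop_of_eventually_const (i₀ := m) fun _ hn => EH_chi_eq hn p⟩

lemma chi_eq_zero_of_mem_V {N M m : ℕ} {p : SSp N} (hp : p ∈ V N m) (hpM : p ∉ V N M)
    {q : SSp N} (hq : q ∈ V N M) : chi N m p q = 0 := by
  refine Set.indicator_of_notMem (fun hqp => hpM (mem_V.2 fun i hi => ?_)) _
  rcases Nat.lt_or_ge i m with him | him
  · rw [← hqp i (by omega), ← hqp (i + 1) (by omega)]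
    exact mem_V.1 hq i hi
  · exact mem_V.1 hp i him

/-- For `M ≥ 0`, `m ≥ M+1` and `p ∈ V_m ∖ V_M`, the indicator `χ_p^m`
of `[p_1 ⋯ p_{m+1}]` vanishes on `V_M` and has finite energy: `χ_p^m ∈ dom_M E`. -/
theorem statement5 (N : ℕ) (hN : 2 ≤ N) (M m : ℕ) (hm : M + 1 ≤ m)
    (p : SSp N) (hp : p ∈ V N m) (hpM : p ∉ V N M) :
    MemDomME N M (chi N m p) :=
  ⟨memDomE_chi N m p, fun _ hq => chi_eq_zero_of_mem_V hp hpM hq⟩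
end
end
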